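/- arXiv:2412.18875 — 2 statements merged into one kernel-verified Lean document; each statement's English description precedes it below -/
import Mathlib

section
/- For every classification π, the economy E(π) admits a competitive equilibrium ⟨p,(x^i)⟩. -/
open MeasureTheory Set
open scoped ENNReal NNReal symmDiff

noncomputable section

/-- A classification: a finite partition of `[0,1]` into intervals of positive measure. -/
structure Classification (ω : Measure ℝ) where
  parts : Finset (Set ℝ)
  isInterval : ∀ C ∈ parts, C.OrdConnected
  posMeas : ∀ C ∈ parts, 0 < ω C
  pairwiseDisj : (parts : Set (Set ℝ)).PairwiseDisjoint id
  cover : ⋃₀ (parts : Set (Set ℝ)) = Set.Icc (0 : ℝ) 1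

/-- The (finite) algebra of subsets generated by a classification. -/
def sigmaAlg {ω : Measure ℝ} (π : Classification ω) : Set (Set ℝ) :=
  {B | ∃ S : Finset (Set ℝ), S ⊆ π.parts ∧ B = ⋃₀ (S : Set (Set ℝ))}

/-- `δ_ω(π,π') = sup_{C ∈ σ(π)} inf_{C' ∈ σ(π')} ω (C △ C')`. -/
def deltaOmega (ω : Measure ℝ) (π π' : Classification ω) : ℝ≥0∞ :=
  ⨆ C ∈ sigmaAlg π, ⨅ C' ∈ sigmaAlg π', ω (C ∆ C')

/-- The pseudometric `d_ω`. -/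
def dOmega (ω : Measure ℝ) (π π' : Classification ω) : ℝ≥0∞ :=
  max (deltaOmega ω π π') (deltaOmega ω π' π)

/-- The simple function `∑_{C ∈ π} (x_C / ω(C)) 𝟙_C`, as an element of `L¹(ω)`. -/
noncomputable def tradable (ω : Measure ℝ) [IsFiniteMeasure ω] (π : Classification ω)
    (x : Set ℝ → ℝ) : Lp ℝ 1 ω :=
  ∑ C ∈ π.parts.attach,
    indicatorConstLp 1 ((π.isInterval C.1 C.2).measurableSet) (measure_ne_top ω C.1)
      (x C.1 / (ω C.1).toReal)

/-- Utility of a tradable bundle: `V(π,x) = U (∑_C (x_C/ω(C)) 𝟙_C)`. -/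
noncomputable def V (ω : Measure ℝ) [IsFiniteMeasure ω] (U : Lp ℝ 1 ω → ℝ)
    (π : Classification ω) (x : Set ℝ → ℝ) : ℝ :=
  U (tradable ω π x)

/-- The positive cone `L¹(ω)₊`. -/
def PosCone (ω : Measure ℝ) : Set (Lp ℝ 1 ω) :=
  {f | ∀ᵐ t ∂ω, 0 ≤ f t}

/-- `U` is a utility function on `L¹(ω)₊`: concave, norm-continuous and monotone. -/
def IsUtility (ω : Measure ℝ) (U : Lp ℝ 1 ω → ℝ) : Prop :=
  ContinuousOn U (PosCone ω) ∧ ConcaveOn ℝ (PosCone ω) U ∧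
    ∀ f g : Lp ℝ 1 ω, f ∈ PosCone ω → g ∈ PosCone ω →
      (∀ᵐ t ∂ω, g t ≤ f t) → U g ≤ U f

/-- Competitive equilibrium of the economy `E(π)` with claims `κ` and utilities `U`. -/
def IsEquilibrium {n : ℕ} (ω : Measure ℝ) [IsFiniteMeasure ω] (κ : Fin n → ℝ)
    (U : Fin n → Lp ℝ 1 ω → ℝ) (π : Classification ω)
    (p : Set ℝ → ℝ) (x : Fin n → Set ℝ → ℝ) : Prop :=
  (∀ C ∈ π.parts, 0 ≤ p C) ∧
  (∀ i, ∀ C ∈ π.parts, 0 ≤ x i C) ∧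
  (∀ C ∈ π.parts, ∑ i, x i C ≤ (ω C).toReal) ∧
  (∀ i, ∑ C ∈ π.parts, p C * x i C ≤ κ i * ∑ C ∈ π.parts, p C * (ω C).toReal) ∧
  (∀ i, ∀ y : Set ℝ → ℝ, (∀ C ∈ π.parts, 0 ≤ y C) →
    V ω (U i) π (x i) < V ω (U i) π y →
    κ i * ∑ C ∈ π.parts, p C * (ω C).toReal < ∑ C ∈ π.parts, p C * y C)

/-- `(x^i)` is a competitive allocation of `E(π)` if some price supports it. -/
def IsCompetitiveAlloc {n : ℕ} (ω : Measure ℝ) [IsFiniteMeasure ω] (κ : Fin n → ℝ)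
    (U : Fin n → Lp ℝ 1 ω → ℝ) (π : Classification ω)
    (x : Fin n → Set ℝ → ℝ) : Prop :=
  ∃ p : Set ℝ → ℝ, IsEquilibrium ω κ U π p x


lemma bw_det_poly {E : Type*} [NormedAddCommGroup E] [NormedSpace ℝ E] [FiniteDimensional ℝ E]
    (A : E →L[ℝ] E) : ∃ P : Polynomial ℝ, P.degree < ((Module.finrank ℝ E + 1 : ℕ) : WithBot ℕ) ∧
      ∀ t : ℝ, P.eval t = (1 + t • A).det := by
  let b := Module.finBasis ℝ E
  let M := LinearMap.toMatrix b b (A : E →ₗ[ℝ] E)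
  refine ⟨Matrix.det ((Polynomial.X : Polynomial ℝ) • M.map Polynomial.C +
    (1 : Matrix _ _ ℝ).map Polynomial.C), ?_, ?_⟩
  · refine lt_of_le_of_lt Polynomial.degree_le_natDegree ?_
    have := Polynomial.natDegree_det_X_add_C_le M 1
    simp only [Fintype.card_fin] at this
    exact_mod_cast Nat.lt_succ_of_le this
  · intro t
    rw [ContinuousLinearMap.det, ← LinearMap.det_toMatrix b, ← Polynomial.coe_evalRingHom,
      RingHom.map_det]
    congr 1
    ext i j
    by_cases hij : i = j
    · subst hij
      simp [M, LinearMap.toMatrix_apply]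
      ring
    · simp [M, LinearMap.toMatrix_apply, hij]
      ring

theorem bw_no_retract {E : Type*} [NormedAddCommGroup E] [InnerProductSpace ℝ E]
    [FiniteDimensional ℝ E] [MeasurableSpace E] [BorelSpace E] (f : E → E)
    (hf : ∀ x ∈ Metric.closedBall (0 : E) 1, ContDiffAt ℝ 1 f x)
    (h1 : ∀ x ∈ Metric.closedBall (0 : E) 1, ‖f x‖ = 1)
    (h2 : ∀ x, ‖x‖ = 1 → f x = x) : False := by
  set D := Metric.closedBall (0 : E) 1 with hD
  set B := Metric.ball (0 : E) 1 with hB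
  have hBD : B ⊆ D := Metric.ball_subset_closedBall
  have hDc : IsCompact D := isCompact_closedBall _ _
  let A : E → E →L[ℝ] E := fun x => fderiv ℝ f x - 1
  have hfd : ∀ x ∈ D, DifferentiableAt ℝ f x := fun x hx => (hf x hx).differentiableAt (by simp)
  have hA : ContinuousOn A D := by
    intro x hx
    have := ((hf x hx).fderiv_right (m := 0) (by simp)).continuousAt
    exact (this.sub continuousAt_const).continuousWithinAt
  obtain ⟨C0, hC0⟩ := hDc.exists_bound_of_continuousOn hA
  let C : NNReal := ⟨|C0| + 1, by positivity⟩
  have hCpos : (0 : ℝ) < C := by change 0 < |C0| + 1; positivity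
  have hC : ∀ x ∈ D, ‖A x‖ ≤ C := fun x hx => (hC0 x hx).trans (by
    change C0 ≤ |C0| + 1; linarith [le_abs_self C0])
  have hgd : ∀ x ∈ D, HasFDerivAt (fun x => f x - x) (A x) x := fun x hx =>
    (hfd x hx).hasFDerivAt.sub (hasFDerivAt_id x)
  have hlip : LipschitzOnWith C (fun x => f x - x) D :=
    (convex_closedBall _ _).lipschitzOnWith_of_nnnorm_hasFDerivWithin_le
      (fun x hx => (hgd x hx).hasFDerivWithinAt) (fun x hx => hC x hx)
  -- small determinants
  obtain ⟨δ, hδ, hdet⟩ : ∃ δ > 0, ∀ L : E →L[ℝ] E, ‖L - 1‖ < δ → 0 < L.det := by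
    have : ∀ᶠ L : E →L[ℝ] E in nhds 1, 0 < L.det := by
      have hc := (ContinuousLinearMap.continuous_det (𝕜 := ℝ) (E := E)).continuousAt (x := 1)
      have h1 : (1 : E →L[ℝ] E).det = 1 := by
        simp [ContinuousLinearMap.det]
      exact hc.eventually (lt_mem_nhds (by simp [h1]))
    obtain ⟨δ, hδ, h⟩ := Metric.eventually_nhds_iff.1 this
    exact ⟨δ, hδ, fun L hL => h (by rwa [dist_eq_norm])⟩
  -- key
  obtain ⟨t0, ht0, ht1, ht2, ht3⟩ : ∃ t0 : ℝ, 0 < t0 ∧ t0 < 1 ∧ t0 * C < 1 ∧ t0 * C < δ := by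
    refine ⟨min (1/2) (min 1 δ / (2 * C)), by positivity, by
      exact (min_le_left _ _).trans_lt (by norm_num), ?_, ?_⟩
    all_goals
      have h := mul_le_mul_of_nonneg_right (min_le_right (1/2 : ℝ) (min 1 δ / (2 * C))) hCpos.le
      have h' : min 1 δ / (2 * C) * C = min 1 δ / 2 := by field_simp
      have h3 := min_le_left 1 δ
      have h4 := min_le_right 1 δ
      have h5 : 0 < min 1 δ := by positivity
      linarith
  have key : ∀ t : ℝ, 0 ≤ t → t ≤ t0 →
      ∫ x in B, (1 + t • A x).det = (volume B).toReal := by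
    intro t htn htt
    let F : E → E := fun x => x + t • (f x - x)
    have htC : t * C < 1 := lt_of_le_of_lt (mul_le_mul_of_nonneg_right htt hCpos.le) ht2
    have hFd : ∀ x ∈ D, HasFDerivAt F (1 + t • A x) x := fun x hx =>
      (hasFDerivAt_id x).add ((hgd x hx).const_smul t)
    have hdp : ∀ x ∈ D, 0 < (1 + t • A x).det := fun x hx => hdet _ (by
      rw [add_sub_cancel_left, norm_smul, Real.norm_of_nonneg htn]
      refine lt_of_le_of_lt ?_ ht3
      exact mul_le_mul htt (hC x hx) (norm_nonneg _) ht0.le)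
    have hinj : InjOn F D := by
      intro x hx y hy hxy
      by_contra hne
      have h := hlip.dist_le_mul x hx y hy
      have h3 : x - y = - (t • ((f x - x) - (f y - y))) := by
        have : x + t • (f x - x) = y + t • (f y - y) := hxy
        rw [smul_sub t (f x - x), neg_sub, sub_eq_sub_iff_add_eq_add, this, add_comm]
      have h4 : ‖x - y‖ ≤ t * (C * ‖x - y‖) := by
        conv_lhs => rw [h3]
        rw [norm_neg, norm_smul, Real.norm_of_nonneg htn]
        rw [dist_eq_norm, dist_eq_norm] at h
        gcongr
      have h5 : 0 < ‖x - y‖ := norm_pos_iff.2 (sub_ne_zero.2 hne)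
      nlinarith
    have hFn : ∀ x ∈ D, ‖F x‖ ≤ (1 - t) * ‖x‖ + t := by
      intro x hx
      have : F x = (1 - t) • x + t • f x := by simp only [F]; module
      rw [this]
      refine (norm_add_le _ _).trans ?_
      rw [norm_smul, norm_smul, h1 x hx, Real.norm_of_nonneg htn,
        Real.norm_of_nonneg (by linarith)]
      simp
    have himg : F '' B = B := by
      apply Subset.antisymm
      · rintro _ ⟨x, hx, rfl⟩
        have := hFn x (hBD hx)
        rw [hB, mem_ball_zero_iff] at hx ⊢
        nlinarith
      · apply (convex_ball (0 : E) 1).isPreconnected.subset_of_closure_inter_subset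
        · rw [isOpen_iff_mem_nhds]
          rintro _ ⟨x, hx, rfl⟩
          have hs : HasStrictFDerivAt F (1 + t • A x) x := by
            have hc : ContDiffAt ℝ 1 F x :=
              contDiffAt_id.add (((hf x (hBD hx)).sub contDiffAt_id).const_smul t)
            have := hc.hasStrictFDerivAt (by simp)
            rwa [(hFd x (hBD hx)).fderiv] at this
          have hsurj : (1 + t • A x).range = ⊤ := by
            have hu : IsUnit ((1 + t • A x : E →L[ℝ] E) : E →ₗ[ℝ] E).det :=
              (hdp x (hBD hx)).ne'.isUnit
            exact LinearMap.isUnit_iff_range_eq_top _ |>.1 (LinearMap.isUnit_iff_isUnit_det _ |>.2 hu)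
          rw [← hs.map_nhds_eq_of_surj hsurj]
          exact Filter.image_mem_map (Metric.isOpen_ball.mem_nhds hx)
        · refine ⟨F 0, ?_, mem_image_of_mem _ (by simp [hB])⟩
          have := hFn 0 (by simp [hD])
          rw [mem_ball_zero_iff]
          simp at this
          linarith
        · rintro y ⟨hy, hyB⟩
          have hcl : IsClosed (F '' D) := (hDc.image_of_continuousOn
            (fun x hx => (hFd x hx).continuousAt.continuousWithinAt)).isClosed
          obtain ⟨x, hx, rfl⟩ := closure_minimal (image_mono hBD) hcl hy
          refine mem_image_of_mem _ ?_
          rw [hB, mem_ball_zero_iff]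
          rcases (mem_closedBall_zero_iff.1 hx).lt_or_eq with h | h
          · exact h
          · exfalso
            have : F x = x := by simp [F, h2 x h]
            rw [this, mem_ball_zero_iff] at hyB
            linarith
    have hcv := integral_image_eq_integral_abs_det_fderiv_smul volume
      (s := B) (f := F) (f' := fun x => 1 + t • A x) Metric.isOpen_ball.measurableSet
      (fun x hx => (hFd x (hBD hx)).hasFDerivWithinAt) (hinj.mono hBD) (fun _ => (1 : ℝ))
    rw [himg] at hcv
    simp only [smul_eq_mul, mul_one, integral_const, MeasurableSet.univ, measureReal_def,
      Measure.restrict_apply, univ_inter] at hcv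
    rw [hcv]
    refine setIntegral_congr_fun Metric.isOpen_ball.measurableSet (fun x hx => ?_)
    exact (abs_of_pos (hdp x (hBD hx))).symm
  -- interpolation
  set N := Module.finrank ℝ E + 1 with hN
  let v : ℕ → ℝ := fun j => t0 / (j + 1)
  have hv : ∀ j, 0 ≤ v j ∧ v j ≤ t0 := fun j => ⟨by positivity, div_le_self ht0.le (by linarith [(Nat.cast_nonneg j : (0:ℝ) ≤ j)])⟩
  have hvi : Set.InjOn v (Finset.range N) := by
    intro a _ b _ hab
    simp only [v] at hab
    rw [div_eq_div_iff (by positivity) (by positivity)] at hab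
    have := mul_left_cancel₀ ht0.ne' hab
    exact_mod_cast (add_right_cancel this).symm
  have hinterp : ∀ x, (1 + (1 : ℝ) • A x).det = ∑ j ∈ Finset.range N,
      (1 + v j • A x).det * (Lagrange.basis (Finset.range N) v j).eval 1 := by
    intro x
    obtain ⟨P, hP, hPe⟩ := bw_det_poly (A x)
    have := Lagrange.eq_interpolate (s := Finset.range N) hvi (f := P) (by rw [Finset.card_range]; exact hP)
    rw [← hPe, this, Lagrange.interpolate_apply, Polynomial.eval_finsetSum]
    simp [hPe]
  have hIntg : ∀ t : ℝ, IntegrableOn (fun x => (1 + t • A x).det) B := by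
    intro t
    refine IntegrableOn.mono_set ?_ hBD
    refine ContinuousOn.integrableOn_compact hDc ?_
    exact ContinuousLinearMap.continuous_det.comp_continuousOn
      (continuousOn_const.add (hA.const_smul t))
  have hfin : ∫ x in B, (1 + (1 : ℝ) • A x).det = (volume B).toReal := by
    simp_rw [hinterp]
    rw [integral_finsetSum _ (fun j _ => (hIntg (v j)).mul_const _)]
    simp_rw [integral_mul_const]
    rw [Finset.sum_congr rfl (fun j _ => by rw [key (v j) (hv j).1 (hv j).2]), ← Finset.mul_sum,
      ← Polynomial.eval_finsetSum, Lagrange.sum_basis hvi ⟨0, by simp [hN]⟩]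
    simp
  have hzero : ∀ x ∈ B, (1 + (1 : ℝ) • A x).det = 0 := by
    intro x hx
    have hL : 1 + (1 : ℝ) • A x = fderiv ℝ f x := by simp [A]
    rw [hL]
    by_contra hne
    have hu : IsUnit (fderiv ℝ f x : E →ₗ[ℝ] E).det := isUnit_iff_ne_zero.2 hne
    obtain ⟨w, hw⟩ := LinearMap.range_eq_top.1 (LinearMap.isUnit_iff_range_eq_top _ |>.1
      (LinearMap.isUnit_iff_isUnit_det _ |>.2 hu)) (f x)
    have hw' : fderiv ℝ f x w = f x := hw
    have hd := (hfd x (hBD hx)).hasFDerivAt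
    have h3 := hd.inner ℝ hd
    have h4 : HasFDerivAt (fun y => inner ℝ (f y) (f y)) (0 : E →L[ℝ] ℝ) x := by
      refine (hasFDerivAt_const (1 : ℝ) x).congr_of_eventuallyEq ?_
      filter_upwards [Metric.isOpen_ball.mem_nhds hx] with y hy
      rw [real_inner_self_eq_norm_sq, h1 y (hBD hy)]; simp
    have h5 := congrArg (fun L => L w) (h3.unique h4)
    simp [hw', h1 x (hBD hx)] at h5
  rw [setIntegral_congr_fun Metric.isOpen_ball.measurableSet hzero] at hfin
  simp only [integral_zero] at hfin
  have hp : 0 < volume B := Metric.measure_ball_pos _ _ one_pos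
  have hp2 : volume B ≠ ⊤ := measure_ball_lt_top.ne
  have := ENNReal.toReal_pos hp.ne' hp2
  linarith

theorem bw_smooth {E : Type*} [NormedAddCommGroup E] [InnerProductSpace ℝ E]
    [FiniteDimensional ℝ E] (h : E → E) (hh : ContDiff ℝ 1 h)
    (hb : ∀ x, ‖h x‖ ≤ 1) : ∃ x ∈ Metric.closedBall (0 : E) 1, h x = x := by
  by_contra hcon
  push Not at hcon
  borelize E
  let u : E → E := fun x => x - h x
  let q : E → ℝ := fun x => inner ℝ x (u x) ^ 2 + ‖u x‖ ^ 2 * (1 - ‖x‖ ^ 2)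
  let lam : E → ℝ := fun x => (- inner ℝ x (u x) + √(q x)) / ‖u x‖ ^ 2
  have hu0 : ∀ x ∈ Metric.closedBall (0 : E) 1, 0 < ‖u x‖ ^ 2 := fun x hx => by
    have : u x ≠ 0 := sub_ne_zero.2 (hcon x hx).symm
    positivity
  have hsph : ∀ x : E, ‖x‖ = 1 → 0 < inner ℝ x (u x) := by
    intro x hx
    have hne : h x ≠ x := hcon x (by simp [hx])
    have h1 : inner ℝ x (u x) = 1 - inner ℝ x (h x) := by
      simp [u, inner_sub_right, hx]
    have h2 : inner ℝ x (h x) ≤ ‖x‖ * ‖h x‖ := real_inner_le_norm _ _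
    rw [h1]
    rw [hx, one_mul] at h2
    rcases (h2.trans (hb x)).lt_or_eq with h3 | h3
    · linarith
    · exfalso
      have h4 : ‖h x‖ = 1 := le_antisymm (hb x) (h3 ▸ h2)
      exact hne ((inner_eq_one_iff_of_norm_eq_one hx h4).1 h3).symm
  have hq0 : ∀ x ∈ Metric.closedBall (0 : E) 1, 0 < q x := by
    intro x hx
    have h1 := hu0 x hx
    rcases (mem_closedBall_zero_iff.1 hx).lt_or_eq with h3 | h3
    · have : 0 < 1 - ‖x‖ ^ 2 := by nlinarith [norm_nonneg x]
      have := mul_pos h1 this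
      simp only [q]; positivity
    · have := hsph x h3
      simp only [q, h3]; norm_num; positivity
  refine bw_no_retract (fun x => x + lam x • u x) ?_ ?_ ?_
  · intro x hx
    have hu : ContDiff ℝ 1 u := contDiff_id.sub hh
    have hi : ContDiff ℝ 1 (fun x => inner ℝ x (u x)) := contDiff_id.inner ℝ hu
    have hq : ContDiff ℝ 1 q := (hi.pow 2).add ((hu.norm_sq ℝ).mul (contDiff_const.sub
      (contDiff_id.norm_sq ℝ)))
    have hl : ContDiffAt ℝ 1 lam x :=
      (hi.contDiffAt.neg.add (hq.contDiffAt.sqrt (hq0 x hx).ne')).div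
        (hu.norm_sq ℝ).contDiffAt (hu0 x hx).ne'
    exact contDiffAt_id.add (hl.smul hu.contDiffAt)
  · intro x hx
    have h1 := hu0 x hx
    have h2 := Real.sq_sqrt (hq0 x hx).le
    have h3 : ‖x + lam x • u x‖ ^ 2 = 1 := by
      rw [norm_add_sq_real, inner_smul_right, norm_smul, mul_pow, Real.norm_eq_abs, sq_abs]
      have h4 : lam x * ‖u x‖ ^ 2 = - inner ℝ x (u x) + √(q x) := by
        exact div_mul_cancel₀ _ h1.ne'
      have h5 : (lam x * ‖u x‖ ^ 2 + inner ℝ x (u x)) ^ 2 = q x := by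
        rw [h4]; linear_combination h2
      simp only [q] at h5
      have h6 : ‖u x‖ ^ 2 * (‖x‖ ^ 2 + 2 * (lam x * inner ℝ x (u x)) + lam x ^ 2 * ‖u x‖ ^ 2)
        = ‖u x‖ ^ 2 * 1 := by linear_combination h5
      exact mul_left_cancel₀ h1.ne' h6
    exact (sq_eq_sq₀ (norm_nonneg _) zero_le_one).1 (by rw [h3]; norm_num)
  · intro x hx
    have : lam x = 0 := by
      simp only [lam, q, hx]
      rw [one_pow, sub_self, mul_zero, add_zero, Real.sqrt_sq (hsph x hx).le]
      simp
    simp [this]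

theorem bw_cont {E : Type*} [NormedAddCommGroup E] [InnerProductSpace ℝ E]
    [FiniteDimensional ℝ E] (h : E → E) (hh : Continuous h)
    (hb : ∀ x, ‖h x‖ ≤ 1) : ∃ x, h x = x := by
  by_contra hcon
  push Not at hcon
  obtain ⟨x0, hx0, hmin⟩ := (isCompact_closedBall (0 : E) 1).exists_isMinOn
    ⟨0, by simp⟩ ((hh.sub continuous_id).norm.continuousOn)
  set m := ‖h x0 - x0‖ with hm
  have hmpos : 0 < m := norm_pos_iff.2 (sub_ne_zero.2 (hcon x0))
  set ε := m / 3 with hε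
  have hεp : 0 < ε := by positivity
  obtain ⟨g, hg, hgd, -⟩ := hh.exists_contDiff_approx 1 (ε := fun _ => ε) continuous_const
    (fun _ => hεp)
  have hgn : ∀ x, ‖g x‖ ≤ 1 + ε := fun x => by
    have h1 := hgd x
    rw [dist_eq_norm] at h1
    have h2 := norm_add_le (h x) (g x - h x)
    rw [add_sub_cancel] at h2
    linarith [hb x]
  obtain ⟨x, hx, hfix⟩ := bw_smooth (fun x => (1 + ε)⁻¹ • g x) (by exact contDiff_const.smul (by exact_mod_cast hg))
    (fun x => by
      rw [norm_smul, Real.norm_of_nonneg (by positivity), inv_mul_le_iff₀ (by positivity)]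
      simpa using hgn x)
  have h1 : g x = (1 + ε) • x := by
    conv_rhs => rw [← hfix]
    rw [smul_smul, mul_inv_cancel₀ (by positivity), one_smul]
  have h2 : h x - x = (h x - g x) + ε • x := by rw [h1]; module
  have h3 : m ≤ ‖h x - x‖ := hmin hx
  have h4 := norm_add_le (h x - g x) (ε • x)
  rw [← h2, norm_smul, Real.norm_of_nonneg hεp.le] at h4
  have h5 := hgd x
  rw [dist_comm, dist_eq_norm] at h5
  have h6 : ‖x‖ ≤ 1 := mem_closedBall_zero_iff.1 hx
  nlinarith

theorem bw_vi {E : Type*} [NormedAddCommGroup E] [InnerProductSpace ℝ E]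
    [FiniteDimensional ℝ E] (K : Set E) (hK : IsCompact K) (hKc : Convex ℝ K) (hne : K.Nonempty)
    (F : E → E) (hF : ContinuousOn F K) : ∃ x ∈ K, ∀ q ∈ K, inner ℝ (F x) (q - x) ≤ 0 := by
  have hex : ∀ u : E, ∃ w ∈ K, ∀ q ∈ K, inner ℝ (u - w) (q - w) ≤ 0 := fun u => by
    obtain ⟨w, hw, h⟩ := exists_norm_eq_iInf_of_complete_convex hne hK.isComplete hKc u
    exact ⟨w, hw, (norm_eq_iInf_iff_real_inner_le_zero hKc hw).1 h⟩
  choose P hPK hP using hex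
  have hPc : Continuous P := by
    have : LipschitzWith 1 P := by
      refine LipschitzWith.of_dist_le_mul fun x y => ?_
      rw [dist_eq_norm, dist_eq_norm, NNReal.coe_one, one_mul]
      have h1 := hP x (P y) (hPK y)
      have h2 := hP y (P x) (hPK x)
      have h3 : inner ℝ (P x - P y) (P x - P y) ≤ inner ℝ (x - y) (P x - P y) := by
        have e1 : inner ℝ (x - P x) (P y - P x) = - inner ℝ (x - P x) (P x - P y) := by
          rw [← inner_neg_right, neg_sub]
        have e2 : inner ℝ (P x - P y) (P x - P y) - inner ℝ (x - y) (P x - P y)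
          = - inner ℝ (x - P x) (P x - P y) + inner ℝ (y - P y) (P x - P y) := by
          rw [← inner_neg_left, ← inner_add_left, ← inner_sub_left]
          congr 1; abel
        linarith
      rw [real_inner_self_eq_norm_sq] at h3
      have h4 := real_inner_le_norm (x - y) (P x - P y)
      by_contra hlt
      push Not at hlt
      nlinarith [norm_nonneg (x - y), norm_nonneg (P x - P y)]
    exact this.continuous
  obtain ⟨R, hR⟩ := hK.isBounded.exists_norm_le
  set S := |R| + 1 with hS
  have hSp : 0 < S := by positivity
  have hFP : Continuous (fun x => F (P x)) :=
    hF.comp_continuous hPc hPK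
  let H : E → E := fun x => P (P x + F (P x))
  have hH : Continuous H := hPc.comp (hPc.add hFP)
  obtain ⟨x, hx⟩ := bw_cont (fun x => S⁻¹ • H (S • x))
    ((hH.comp (continuous_const_smul S)).const_smul _) (fun x => by
      rw [norm_smul, Real.norm_of_nonneg (by positivity), inv_mul_le_iff₀ (by positivity)]
      have := hR _ (hPK (P (S • x) + F (P (S • x))))
      change ‖P (P (S • x) + F (P (S • x)))‖ ≤ _
      linarith [le_abs_self R])
  have hy : H (S • x) = S • x := by
    conv_rhs => rw [← hx]
    simp only [smul_smul]
    rw [mul_inv_cancel₀ hSp.ne', one_smul]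
  set y := S • x
  have hyK : y ∈ K := hy ▸ hPK _
  have hPy : P y = y := by
    have := hP y y hyK
    rw [real_inner_self_eq_norm_sq] at this
    have h0 : ‖y - P y‖ = 0 := by nlinarith [norm_nonneg (y - P y)]
    exact (sub_eq_zero.1 (norm_eq_zero.1 h0)).symm
  refine ⟨y, hyK, fun q hq => ?_⟩
  have h1 := hP (P y + F (P y)) q hq
  have h2 : P (P y + F (P y)) = y := hy
  rw [h2, hPy, add_sub_cancel_left] at h1
  exact h1

/-- Gale-Nikaido-Debreu lemma for continuous excess demand functions. -/
theorem gnd {ι : Type*} [Fintype ι] [Nonempty ι] (z : (ι → ℝ) → (ι → ℝ))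
    (hz : ContinuousOn z (stdSimplex ℝ ι))
    (hw : ∀ p ∈ stdSimplex ℝ ι, ∑ i, p i * z p i ≤ 0) :
    ∃ p ∈ stdSimplex ℝ ι, ∀ i, z p i ≤ 0 := by
  classical
  let T := EuclideanSpace.equiv ι ℝ
  obtain ⟨x, hx, hq⟩ := bw_vi (T.symm '' stdSimplex ℝ ι)
    ((isCompact_stdSimplex (𝕜 := ℝ) ι).image T.symm.continuous)
    ((convex_stdSimplex ℝ ι).is_linear_image T.symm.toLinearMap.isLinear)
    (Set.Nonempty.image _ ⟨_, single_mem_stdSimplex ℝ (Classical.arbitrary ι)⟩)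
    (fun x => T.symm (z (T x)))
    (T.symm.continuous.comp_continuousOn (hz.comp T.continuous.continuousOn (by
      rintro _ ⟨p, hp, rfl⟩
      simpa using hp)))
  obtain ⟨p, hp, rfl⟩ := hx
  refine ⟨p, hp, fun i => ?_⟩
  have h1 := hq _ (mem_image_of_mem _ (single_mem_stdSimplex ℝ i))
  have h2 := hw p hp
  rw [inner_sub_right] at h1
  have e : ∀ a b : ι → ℝ, inner ℝ (T.symm a) (T.symm b) = ∑ i, b i * a i := by
    intro a b
    simp [T, PiLp.inner_apply]
  simp only [ContinuousLinearEquiv.apply_symm_apply] at h1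
  rw [e, e] at h1
  simp [Pi.single_apply] at h1
  linarith

/-- `x` is an optimal choice in the truncated budget set. -/
def IsDem {ι : Type*} [Fintype ι] (e : ι → ℝ) (k : ℝ) (u : ℝ → (ι → ℝ) → ℝ)
    (ε : ℝ) (p x : ι → ℝ) : Prop :=
  x ∈ Set.Icc 0 (2 • e) ∧ ∑ c, p c * x c ≤ k * ∑ c, p c * e c ∧
    ∀ y ∈ Set.Icc 0 (2 • e), ∑ c, p c * y c ≤ k * ∑ c, p c * e c → u ε y ≤ u ε x

lemma inc_pos {ι : Type*} [Fintype ι] (e : ι → ℝ) (he : ∀ c, 0 < e c) (p : ι → ℝ)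
    (hp : p ∈ stdSimplex ℝ ι) : 0 < ∑ c, p c * e c := by
  refine lt_of_le_of_ne (Finset.sum_nonneg fun c _ => mul_nonneg (hp.1 c) (he c).le) fun h => ?_
  have h0 := (Finset.sum_eq_zero_iff_of_nonneg
    (fun c _ => mul_nonneg (hp.1 c) (he c).le)).1 h.symm
  have h1 := hp.2
  rw [Finset.sum_eq_zero fun c hc => (mul_eq_zero.1 (h0 c hc)).resolve_right (he c).ne'] at h1
  exact zero_ne_one h1

lemma dem_limit {ι α : Type*} [Fintype ι] (e : ι → ℝ) (he : ∀ c, 0 < e c) (k : ℝ) (hk : 0 < k)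
    (u : ℝ → (ι → ℝ) → ℝ) (hu : Continuous (fun q : ℝ × (ι → ℝ) => u q.1 q.2))
    (l : Filter α) [l.NeBot] (ε : α → ℝ) (p x : α → ι → ℝ) (ε0 : ℝ) (p0 x0 : ι → ℝ)
    (hε : Filter.Tendsto ε l (nhds ε0)) (hp : Filter.Tendsto p l (nhds p0))
    (hx : Filter.Tendsto x l (nhds x0)) (hp0 : p0 ∈ stdSimplex ℝ ι)
    (hd : ∀ᶠ a in l, IsDem e k u (ε a) (p a) (x a)) : IsDem e k u ε0 p0 x0 := by
  have hlin : ∀ (y : α → ι → ℝ) (y0 : ι → ℝ), Filter.Tendsto y l (nhds y0) →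
      Filter.Tendsto (fun a => ∑ c, p a c * y a c) l (nhds (∑ c, p0 c * y0 c)) := by
    intro y y0 hy
    refine tendsto_finsetSum _ fun c _ => ?_
    exact (tendsto_pi_nhds.1 hp c).mul (tendsto_pi_nhds.1 hy c)
  have hinc := (hlin (fun _ => e) e tendsto_const_nhds).const_mul k
  have hux : Filter.Tendsto (fun a => u (ε a) (x a)) l (nhds (u ε0 x0)) :=
    (hu.tendsto (ε0, x0)).comp (hε.prodMk_nhds hx)
  refine ⟨isClosed_Icc.mem_of_tendsto hx (hd.mono fun a h => h.1),
    le_of_tendsto_of_tendsto (hlin x x0 hx) hinc (hd.mono fun a h => h.2.1), fun y hy hyb => ?_⟩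
  have hpos := mul_pos hk (inc_pos e he p0 hp0)
  have step : ∀ t : ℝ, t ∈ Set.Ico (0:ℝ) 1 → u ε0 (t • y) ≤ u ε0 x0 := by
    intro t ht
    have hty : t • y ∈ Set.Icc 0 (2 • e) := by
      refine ⟨smul_nonneg ht.1 hy.1, le_trans ?_ hy.2⟩
      intro c
      have : 0 ≤ y c := hy.1 c
      simp only [Pi.smul_apply, smul_eq_mul]
      nlinarith [ht.2]
    have hst : ∑ c, p0 c * (t • y) c < k * ∑ c, p0 c * e c := by
      have : ∑ c, p0 c * (t • y) c = t * ∑ c, p0 c * y c := by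
        rw [Finset.mul_sum]
        refine Finset.sum_congr rfl fun c _ => ?_
        simp only [Pi.smul_apply, smul_eq_mul]; ring
      rw [this]
      nlinarith [ht.1, ht.2]
    have hev := (hlin (fun _ => t • y) _ tendsto_const_nhds).eventually_lt hinc hst
    have huy : Filter.Tendsto (fun a => u (ε a) (t • y)) l (nhds (u ε0 (t • y))) :=
      (hu.tendsto (ε0, t • y)).comp (hε.prodMk_nhds tendsto_const_nhds)
    refine le_of_tendsto_of_tendsto huy hux ?_
    filter_upwards [hev, hd] with a h1 h2
    exact h2.2.2 _ hty h1.le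
  have hcont : Continuous (fun t : ℝ => u ε0 (t • y)) :=
    hu.comp (continuous_const.prodMk (continuous_id.smul continuous_const))
  have h1 : Filter.Tendsto (fun t : ℝ => u ε0 (t • y)) (nhdsWithin 1 (Set.Iio 1))
      (nhds (u ε0 ((1:ℝ) • y))) := (hcont.tendsto 1).mono_left nhdsWithin_le_nhds
  rw [one_smul] at h1
  refine le_of_tendsto h1 ?_
  filter_upwards [Ico_mem_nhdsLT (zero_lt_one' ℝ)] with t ht using step t ht

lemma sum_lin {ι : Type*} [Fintype ι] (p x y : ι → ℝ) (a b : ℝ) :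
    ∑ c, p c * (a • x + b • y) c = a * ∑ c, p c * x c + b * ∑ c, p c * y c := by
  rw [Finset.mul_sum, Finset.mul_sum, ← Finset.sum_add_distrib]
  refine Finset.sum_congr rfl fun c _ => ?_
  simp only [Pi.add_apply, Pi.smul_apply, smul_eq_mul]; ring

lemma dem_unique {ι : Type*} [Fintype ι] (e : ι → ℝ) (k : ℝ)
    (v : (ι → ℝ) → ℝ) (hv : ConcaveOn ℝ {x | 0 ≤ x} v) (ε : ℝ) (hε : 0 < ε) (p x y : ι → ℝ)
    (hx : IsDem e k (fun ε x => v x - ε * ∑ c, x c ^ 2) ε p x)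
    (hy : IsDem e k (fun ε x => v x - ε * ∑ c, x c ^ 2) ε p y) : x = y := by
  by_contra hne
  have hm := hx.2.2 ((1/2 : ℝ) • x + (1/2 : ℝ) • y)
    ((convex_Icc _ _) hx.1 hy.1 (by norm_num) (by norm_num) (by norm_num))
    (by rw [sum_lin]; linarith [hx.2.1, hy.2.1])
  have hxy := hx.2.2 y hy.1 hy.2.1
  have hyx := hy.2.2 x hx.1 hx.2.1
  have hc := hv.2 hx.1.1 hy.1.1 (show (0:ℝ) ≤ 1/2 by norm_num) (show (0:ℝ) ≤ 1/2 by norm_num)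
    (by norm_num)
  simp only [smul_eq_mul] at hc
  simp only at hm hxy hyx
  have hs : ∑ c, ((1/2 : ℝ) • x + (1/2 : ℝ) • y) c ^ 2 = 1/2 * ∑ c, x c ^ 2 + 1/2 * ∑ c, y c ^ 2
      - 1/4 * ∑ c, (x c - y c) ^ 2 := by
    rw [Finset.mul_sum, Finset.mul_sum, Finset.mul_sum, ← Finset.sum_add_distrib,
      ← Finset.sum_sub_distrib]
    refine Finset.sum_congr rfl fun c _ => ?_
    simp only [Pi.add_apply, Pi.smul_apply, smul_eq_mul]; ring
  have hp : 0 < ∑ c, (x c - y c) ^ 2 := by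
    obtain ⟨c, hcne⟩ := Function.ne_iff.1 hne
    exact Finset.sum_pos' (fun c _ => sq_nonneg _)
      ⟨c, Finset.mem_univ _, by have := sub_ne_zero.2 hcne; positivity⟩
  rw [hs] at hm
  have := mul_pos hε hp
  nlinarith

lemma dem_exists {ι : Type*} [Fintype ι] (e : ι → ℝ) (he : ∀ c, 0 < e c) (k : ℝ) (hk : 0 < k)
    (u : ℝ → (ι → ℝ) → ℝ) (hu : Continuous (fun q : ℝ × (ι → ℝ) => u q.1 q.2))
    (ε : ℝ) (p : ι → ℝ) (hp : p ∈ stdSimplex ℝ ι) : ∃ x, IsDem e k u ε p x := by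
  have hcl : IsClosed {x : ι → ℝ | ∑ c, p c * x c ≤ k * ∑ c, p c * e c} :=
    isClosed_le (by fun_prop) continuous_const
  have hcomp := (isCompact_Icc (a := (0 : ι → ℝ)) (b := 2 • e)).inter_right hcl
  have hpos := mul_pos hk (inc_pos e he p hp)
  obtain ⟨x, hx, hmax⟩ := hcomp.exists_isMaxOn (f := u ε)
    ⟨0, ⟨le_refl _, fun c => by simpa using (he c).le⟩, by simpa using hpos.le⟩
    (hu.comp (continuous_const.prodMk continuous_id)).continuousOn
  exact ⟨x, hx.1, hx.2, fun y hy hyb => hmax ⟨hy, hyb⟩⟩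

theorem eq_abstract {ι J : Type*} [Fintype ι] [Nonempty ι] [Fintype J] (e : ι → ℝ)
    (he : ∀ c, 0 < e c) (k : J → ℝ) (hk : ∀ j, 0 < k j) (hks : ∑ j, k j = 1)
    (v : J → (ι → ℝ) → ℝ) (hvc : ∀ j, Continuous (v j))
    (hv : ∀ j, ConcaveOn ℝ {x | 0 ≤ x} (v j)) :
    ∃ (p : ι → ℝ) (x : J → ι → ℝ), p ∈ stdSimplex ℝ ι ∧ (∀ j, 0 ≤ x j) ∧
      (∀ c, ∑ j, x j c ≤ e c) ∧ (∀ j, ∑ c, p c * x j c ≤ k j * ∑ c, p c * e c) ∧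
      ∀ j, ∀ y : ι → ℝ, 0 ≤ y → v j (x j) < v j y → k j * ∑ c, p c * e c < ∑ c, p c * y c := by
  let u : J → ℝ → (ι → ℝ) → ℝ := fun j ε x => v j x - ε * ∑ c, x c ^ 2
  have hu : ∀ j, Continuous (fun q : ℝ × (ι → ℝ) => u j q.1 q.2) := by
    intro j
    have := hvc j
    simp only [u]; fun_prop
  -- equilibria of the perturbed economies
  have hpert : ∀ ε : ℝ, 0 < ε → ∃ (p : ι → ℝ) (x : J → ι → ℝ), p ∈ stdSimplex ℝ ι ∧
      (∀ j, IsDem e (k j) (u j) ε p (x j)) ∧ ∀ c, ∑ j, x j c ≤ e c := by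
    intro ε hε
    have hex : ∀ (p : ι → ℝ) (j : J), ∃ x, p ∈ stdSimplex ℝ ι → IsDem e (k j) (u j) ε p x := by
      intro p j
      by_cases hp : p ∈ stdSimplex ℝ ι
      · obtain ⟨x, hx⟩ := dem_exists e he (k j) (hk j) (u j) (hu j) ε p hp
        exact ⟨x, fun _ => hx⟩
      · exact ⟨0, fun h => absurd h hp⟩
    choose d hd using hex
    have hdc : ∀ j, ContinuousOn (fun p => d p j) (stdSimplex ℝ ι) := by
      intro j p hp
      refine (isCompact_Icc (a := (0 : ι → ℝ)) (b := 2 • e)).tendsto_nhds_of_unique_mapClusterPt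
        (eventually_mem_nhdsWithin.mono fun q hq => (hd q j hq).1) fun y hy hcl => ?_
      obtain ⟨W, hW, hWy⟩ := mapClusterPt_iff_ultrafilter.1 hcl
      have hWs : ∀ᶠ q in (W : Filter (ι → ℝ)), q ∈ stdSimplex ℝ ι := hW self_mem_nhdsWithin
      refine dem_unique e (k j) (v j) (hv j) ε hε p y (d p j) ?_ (hd p j hp)
      exact dem_limit e he (k j) (hk j) (u j) (hu j) (W : Filter (ι → ℝ)) (fun _ => ε) (fun q => q) (fun q => d q j) ε p y
        tendsto_const_nhds (hW.trans nhdsWithin_le_nhds) hWy hp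
        (hWs.mono fun q hq => hd q j hq)
    obtain ⟨p, hp, hz⟩ := gnd (fun p c => ∑ j, d p j c - e c) (by
      refine continuousOn_pi.2 fun c => ?_
      refine ContinuousOn.sub (continuousOn_finsetSum _ fun j _ => ?_) continuousOn_const
      exact continuousOn_pi.1 (hdc j) c) (fun p hp => by
        have h1 : ∑ c, p c * (∑ j, d p j c - e c)
            = ∑ j, ∑ c, p c * d p j c - ∑ c, p c * e c := by
          rw [Finset.sum_comm, ← Finset.sum_sub_distrib]
          refine Finset.sum_congr rfl fun c _ => ?_
          rw [mul_sub, Finset.mul_sum]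
        rw [h1]
        have h2 : ∑ j, ∑ c, p c * d p j c ≤ ∑ j, k j * ∑ c, p c * e c :=
          Finset.sum_le_sum fun j _ => (hd p j hp).2.1
        rw [← Finset.sum_mul, hks, one_mul] at h2
        linarith)
    exact ⟨p, d p, hp, fun j => hd p j hp, fun c => by have := hz c; linarith⟩
  choose P X hP hX hF using fun m : ℕ => hpert (1 / ((m : ℝ) + 1)) (by positivity)
  let W : Ultrafilter ℕ := Filter.hyperfilter ℕ
  have hWle : (W : Filter ℕ) ≤ Filter.atTop := by
    rw [← Nat.cofinite_eq_atTop]; exact Filter.hyperfilter_le_cofinite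
  obtain ⟨p, hp, hpl⟩ := (isCompact_stdSimplex (𝕜 := ℝ) ι).ultrafilter_le_nhds (W.map P)
    (Filter.le_principal_iff.2 (Filter.mem_map.2 (Filter.univ_mem' hP)))
  have hxl : ∀ j, ∃ x ∈ Set.Icc 0 (2 • e), ((W.map fun m => X m j : Ultrafilter _) : Filter _)
      ≤ nhds x := fun j =>
    isCompact_Icc.ultrafilter_le_nhds (W.map fun m => X m j)
    (Filter.le_principal_iff.2 (Filter.mem_map.2 (Filter.univ_mem' fun m => (hX m j).1)))
  choose x hxK hxl using hxl
  have hdem : ∀ j, IsDem e (k j) (u j) 0 p (x j) := fun j =>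
    dem_limit e he (k j) (hk j) (u j) (hu j) W (fun m : ℕ => 1 / ((m : ℝ) + 1)) P
      (fun m => X m j) 0 p (x j) (tendsto_one_div_add_atTop_nhds_zero_nat.mono_left hWle)
      hpl (hxl j) hp (Filter.Eventually.of_forall fun m => hX m j)
  have hfeas : ∀ c, ∑ j, x j c ≤ e c := fun c => by
    have : Filter.Tendsto (fun m => ∑ j, X m j c) W (nhds (∑ j, x j c)) :=
      tendsto_finsetSum _ fun j _ => tendsto_pi_nhds.1 (hxl j) c
    exact le_of_tendsto this (Filter.Eventually.of_forall fun m => hF m c)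
  refine ⟨p, x, hp, fun j => (hdem j).1.1, hfeas, fun j => (hdem j).2.1, fun j y hy hlt => ?_⟩
  by_contra hb
  push Not at hb
  have hx0 : 0 ≤ x j := (hdem j).1.1
  have hxe : ∀ c, x j c ≤ e c := fun c =>
    (Finset.single_le_sum (f := fun j => x j c) (fun i _ => (hdem i).1.1 c)
      (Finset.mem_univ j)).trans (hfeas c)
  -- small step
  have hsmall : ∀ᶠ t : ℝ in nhdsWithin 0 (Set.Ioi 0), ∀ c, (1 - t) * x j c + t * y c < 2 * e c := by
    rw [Filter.eventually_all]
    intro c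
    have hc : Continuous fun t : ℝ => (1 - t) * x j c + t * y c := by fun_prop
    refine ((hc.tendsto 0).mono_left nhdsWithin_le_nhds).eventually (gt_mem_nhds ?_)
    have := hxe c; have := he c
    linarith
  obtain ⟨t, ht, ht0, ht1⟩ := (hsmall.and (Ioo_mem_nhdsGT (zero_lt_one' ℝ))).exists
  have h1 := (hdem j).2.2 ((1 - t) • x j + t • y)
    ⟨add_nonneg (smul_nonneg (by linarith) hx0) (smul_nonneg ht0.le hy), fun c => by
      simpa using (ht c).le⟩
    (by rw [sum_lin]; nlinarith [(hdem j).2.1])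
  have h2 := (hv j).2 hx0 hy (show (0:ℝ) ≤ 1 - t by linarith) ht0.le (by ring)
  simp only [u, zero_mul, sub_zero] at h1
  simp only [smul_eq_mul] at h2
  nlinarith

lemma indConst_smul (ω : Measure ℝ) [IsFiniteMeasure ω] {s : Set ℝ} (hs : MeasurableSet s)
    (c : ℝ) : indicatorConstLp 1 hs (measure_ne_top ω s) c
      = c • indicatorConstLp 1 hs (measure_ne_top ω s) (1 : ℝ) := by
  apply Lp.ext
  filter_upwards [indicatorConstLp_coeFn (p := 1) (hs := hs) (hμs := measure_ne_top ω s) (c := c),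
    indicatorConstLp_coeFn (p := 1) (hs := hs) (hμs := measure_ne_top ω s) (c := (1 : ℝ)),
    Lp.coeFn_smul c (indicatorConstLp 1 hs (measure_ne_top ω s) (1 : ℝ))] with t h1 h2 h3
  rw [h1, h3, Pi.smul_apply, h2]
  by_cases ht : t ∈ s <;> simp [ht]

lemma tradable_pos (ω : Measure ℝ) [IsFiniteMeasure ω] (π : Classification ω) (x : Set ℝ → ℝ)
    (hx : ∀ C ∈ π.parts, 0 ≤ x C) : tradable ω π x ∈ PosCone ω := by
  have : 0 ≤ tradable ω π x := by
    refine Finset.sum_nonneg fun C _ => ?_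
    rw [← Lp.coeFn_nonneg]
    filter_upwards [indicatorConstLp_coeFn (p := 1) (hs := (π.isInterval C.1 C.2).measurableSet)
      (hμs := measure_ne_top ω C.1) (c := x C.1 / (ω C.1).toReal)] with t h1
    rw [h1]
    exact Set.indicator_nonneg (fun _ _ => div_nonneg (hx _ C.2) ENNReal.toReal_nonneg) t
  exact (Lp.coeFn_nonneg _).2 this

/-- Extension of a bundle by zero. -/
def extB {ω : Measure ℝ} (π : Classification ω) (x : {C // C ∈ π.parts} → ℝ) : Set ℝ → ℝ :=
  fun C => open Classical in if h : C ∈ π.parts then x ⟨C, h⟩ else 0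

lemma extB_apply {ω : Measure ℝ} (π : Classification ω) (x : {C // C ∈ π.parts} → ℝ)
    (C : {C // C ∈ π.parts}) : extB π x C.1 = x C := by
  simp [extB, C.2]

/-- The linear map from bundles to `L¹`. -/
def tradL (ω : Measure ℝ) [IsFiniteMeasure ω] (π : Classification ω) :
    ({C // C ∈ π.parts} → ℝ) →ₗ[ℝ] Lp ℝ 1 ω where
  toFun x := ∑ C, (x C / (ω C.1).toReal) •
    indicatorConstLp 1 ((π.isInterval C.1 C.2).measurableSet) (measure_ne_top ω C.1) (1 : ℝ)
  map_add' x y := by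
    rw [← Finset.sum_add_distrib]
    refine Finset.sum_congr rfl fun C _ => ?_
    rw [← add_smul, Pi.add_apply, add_div]
  map_smul' a x := by
    rw [Finset.smul_sum]
    refine Finset.sum_congr rfl fun C _ => ?_
    rw [smul_smul, Pi.smul_apply, smul_eq_mul, RingHom.id_apply, mul_div_assoc]

lemma tradable_eq (ω : Measure ℝ) [IsFiniteMeasure ω] (π : Classification ω) (x : Set ℝ → ℝ) :
    tradable ω π x = tradL ω π (fun C => x C.1) := by
  refine Finset.sum_congr rfl fun C _ => ?_
  exact indConst_smul ω _ _

lemma tradL_pos (ω : Measure ℝ) [IsFiniteMeasure ω] (π : Classification ω)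
    (x : {C // C ∈ π.parts} → ℝ) (hx : 0 ≤ x) : tradL ω π x ∈ PosCone ω := by
  have h := tradable_pos ω π (extB π x) (fun C hC => by
    rw [extB_apply π x ⟨C, hC⟩]; exact hx _)
  rw [tradable_eq] at h
  simpa only [extB_apply] using h

/-- for every classification π, the economy E(π) admits a competitive
equilibrium. -/
theorem equilibrium_exists (ω : Measure ℝ) [IsProbabilityMeasure ω]
    (hω : ω (Set.Icc (0 : ℝ) 1) = 1)
    (n : ℕ) (κ : Fin n → ℝ) (hκpos : ∀ i, 0 < κ i) (hκsum : ∑ i, κ i = 1)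
    (U : Fin n → Lp ℝ 1 ω → ℝ) (hU : ∀ i, IsUtility ω (U i))
    (π : Classification ω) :
    ∃ (p : Set ℝ → ℝ) (x : Fin n → Set ℝ → ℝ), IsEquilibrium ω κ U π p x := by
  have hne : Nonempty {C // C ∈ π.parts} := by
    have h0 : (0 : ℝ) ∈ ⋃₀ (π.parts : Set (Set ℝ)) := by rw [π.cover]; simp
    obtain ⟨C, hC, -⟩ := h0
    exact ⟨⟨C, hC⟩⟩
  have hsup : ∀ x : {C // C ∈ π.parts} → ℝ, 0 ≤ x → x ⊔ 0 = x := fun x hx => sup_eq_left.2 hx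
  have hLc : Continuous (tradL ω π) := (tradL ω π).continuous_of_finiteDimensional
  obtain ⟨p, x, hp, hx0, hf, hb, ho⟩ := eq_abstract
    (fun C : {C // C ∈ π.parts} => (ω C.1).toReal)
    (fun C => ENNReal.toReal_pos (π.posMeas C.1 C.2).ne' (measure_ne_top _ _)) κ hκpos hκsum
    (fun i x => U i (tradL ω π (x ⊔ 0)))
    (fun i => by
      have h1 : Continuous fun x : {C // C ∈ π.parts} → ℝ => tradL ω π (x ⊔ 0) :=
        hLc.comp (continuous_pi fun c => (continuous_apply c).max continuous_const)
      exact (hU i).1.comp_continuous h1 fun x => tradL_pos ω π _ le_sup_right)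
    (fun i => by
      refine ⟨convex_Ici (𝕜 := ℝ) (0 : {C // C ∈ π.parts} → ℝ), ?_⟩
      intro x hx y hy a b ha hb' hab
      have hx' : 0 ≤ x := hx
      have hy' : 0 ≤ y := hy
      simp only
      rw [hsup x hx', hsup y hy',
        hsup _ (add_nonneg (smul_nonneg ha hx') (smul_nonneg hb' hy')), map_add, map_smul, map_smul]
      exact (hU i).2.1.2 (tradL_pos ω π x hx') (tradL_pos ω π y hy') ha hb' hab)
  have hs : ∀ (y q : Set ℝ → ℝ), ∑ C ∈ π.parts, q C * y C
      = ∑ C : {C // C ∈ π.parts}, q C.1 * y C.1 := fun y q =>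
    (Finset.sum_coe_sort π.parts (fun C => q C * y C)).symm
  have hinc : ∑ C ∈ π.parts, extB π p C * (ω C).toReal
      = ∑ C : {C // C ∈ π.parts}, p C * (ω C.1).toReal := by
    rw [hs (fun C => (ω C).toReal)]
    simp only [extB_apply]
  refine ⟨extB π p, fun i => extB π (x i), ?_, ?_, ?_, ?_, ?_⟩
  · intro C hC
    rw [extB_apply π p ⟨C, hC⟩]; exact hp.1 _
  · intro i C hC
    exact (hx0 i ⟨C, hC⟩).trans_eq (extB_apply π (x i) ⟨C, hC⟩).symm
  · intro C hC
    have := hf ⟨C, hC⟩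
    simpa only [extB_apply π _ ⟨C, hC⟩] using this
  · intro i
    rw [hinc, hs]
    simpa only [extB_apply] using hb i
  · intro i y hy hlt
    rw [hinc, hs]
    simp only [extB_apply]
    have hy' : (0 : {C // C ∈ π.parts} → ℝ) ≤ fun C => y C.1 := fun C => hy C.1 C.2
    refine ho i (fun C => y C.1) hy' ?_
    simp only [V, tradable_eq, extB_apply] at hlt
    rw [hsup _ hy', hsup _ (hx0 i)]
    exact hlt

end
end

section
/- For every t ∈ (0,1), the economy E(π_t) with π_t = {A, B_t, C_t, D}, where A = [0,1/4), B_t = [1/4,(1+2t)/4), C_t = [(1+2t)/4,3/4), D = [3/4,1], has a competitive equilibrium ⟨p_t,(x^i)⟩ whose prices satisfy p_t(D) = 1 and: if t ≤ 1/6 then p_t(A) = p_t(B_t) = 1/(1−2t) and p_t(C_t) = 1/(2(1−t)); if 1/6 < t ≤ 1/2 then p_t(A) = p_t(B_t) = 2/(1+2t) and p_t(C_t) = 1/(2(1−t)); if 1/2 ≤ t ≤ 5/6 then p_t(A) = (3−2t)/2, p_t(B_t) = (3−2t)/(4t), and p_t(C_t) = 1; if t > 5/6 then p_t(A) = 2t−1,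 p_t(B_t) = (2t−1)/(2t), and p_t(C_t) = 1. In particular, the price ratio p_t(A)/p_t(D) takes every value in [2/3, 3/2] as t ranges over (0,1). -/
open MeasureTheory Set
open scoped ENNReal Classical

noncomputable section

/-- Lebesgue measure of a set, as a real number. -/
def lvol (C : Set ℝ) : ℝ := (volume C).toReal

/-- Linear utility over tradable bundles: `V(π,x) = ∑_{C∈π} (x_C/λ(C)) ν(C)`,
where the evaluation of each commodity is given by the set function `νf`. -/
def Vlin (parts : Finset (Set ℝ)) (νf : Set ℝ → ℝ) (x : Set ℝ → ℝ) : ℝ :=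
  ∑ C ∈ parts, (x C / lvol C) * νf C

/-- Competitive equilibrium of the economy on the commodities `parts` with claims `κ`
and utilities `Vf` on tradable bundles. -/
def IsEqm {n : ℕ} (parts : Finset (Set ℝ)) (κ : Fin n → ℝ)
    (Vf : Fin n → (Set ℝ → ℝ) → ℝ) (p : Set ℝ → ℝ) (x : Fin n → Set ℝ → ℝ) : Prop :=
  (∀ C ∈ parts, 0 ≤ p C) ∧
  (∀ i, ∀ C ∈ parts, 0 ≤ x i C) ∧
  (∀ C ∈ parts, ∑ i, x i C ≤ lvol C) ∧
  (∀ i, ∑ C ∈ parts, p C * x i C ≤ κ i * ∑ C ∈ parts, p C * lvol C) ∧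
  (∀ i, ∀ y : Set ℝ → ℝ, (∀ C ∈ parts, 0 ≤ y C) → Vf i (x i) < Vf i y →
    κ i * ∑ C ∈ parts, p C * lvol C < ∑ C ∈ parts, p C * y C)

namespace Stmt11

/-- Group 1's evaluation measure: `ν₁(F) = 2 λ(F ∩ [0,1/2])`. -/
def ν₁ (F : Set ℝ) : ℝ := 2 * lvol (F ∩ Set.Icc 0 (1/2))

/-- Group 2's evaluation measure: `ν₂(F) = 2 λ(F ∩ [1/2,1])`. -/
def ν₂ (F : Set ℝ) : ℝ := 2 * lvol (F ∩ Set.Icc (1/2) 1)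

/-- The `2n` agents: the first `n` belong to group 1, the rest to group 2. -/
def νs (n : ℕ) : Fin (2 * n) → Set ℝ → ℝ := fun i => if (i : ℕ) < n then ν₁ else ν₂

/-- Identical claims `κᵢ = 1/(2n)`. -/
def κ (n : ℕ) : Fin (2 * n) → ℝ := fun _ => 1 / (2 * n)

def A : Set ℝ := Set.Ico 0 (1/4)
def Bt (t : ℝ) : Set ℝ := Set.Ico (1/4) ((1 + 2*t)/4)
def Ct (t : ℝ) : Set ℝ := Set.Ico ((1 + 2*t)/4) (3/4)
def D : Set ℝ := Set.Icc (3/4) 1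

/-- The classification `π_t = {A, B_t, C_t, D}`. -/
def partsT (t : ℝ) : Finset (Set ℝ) := {A, Bt t, Ct t, D}

theorem sum_two_groups (n : ℕ) (a b : ℝ) :
    ∑ i : Fin (2 * n), (if (i : ℕ) < n then a else b) = n * a + n * b := by
  rw [Fin.sum_univ_eq_sum_range (fun i => if i < n then a else b) (2 * n), two_mul,
    Finset.sum_range_add]
  congr 1
  · rw [Finset.sum_congr rfl (g := fun _ => a)]
    · simp
    · intro i hi
      simp [Finset.mem_range.mp hi]
  · simp

theorem opt_aux (parts : Finset (Set ℝ)) (hpos : ∀ C ∈ parts, 0 < lvol C)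
    (nu p z y : Set ℝ → ℝ) (m k W : ℝ) (hm : 0 < m)
    (hle : ∀ C ∈ parts, nu C ≤ m * p C * lvol C)
    (heq : ∀ C ∈ parts, nu C = m * p C * lvol C ∨ z C = 0)
    (hz : ∑ C ∈ parts, p C * z C = W)
    (hy : ∀ C ∈ parts, 0 ≤ y C)
    (h : Vlin parts nu (fun C => k * z C) < Vlin parts nu y) :
    k * W < ∑ C ∈ parts, p C * y C := by
  have h1 : Vlin parts nu (fun C => k * z C) = m * (k * W) := by
    unfold Vlin
    rw [← hz, Finset.mul_sum, Finset.mul_sum]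
    refine Finset.sum_congr rfl fun C hC => ?_
    have := hpos C hC
    rcases heq C hC with e | e
    · rw [e]; field_simp
    · simp only [e]; ring
  have h2 : Vlin parts nu y ≤ m * ∑ C ∈ parts, p C * y C := by
    unfold Vlin
    rw [Finset.mul_sum]
    refine Finset.sum_le_sum fun C hC => ?_
    have := hpos C hC
    have hyl : 0 ≤ y C / lvol C := div_nonneg (hy C hC) this.le
    calc y C / lvol C * nu C ≤ y C / lvol C * (m * p C * lvol C) :=
          mul_le_mul_of_nonneg_left (hle C hC) hyl
      _ = m * (p C * y C) := by field_simp
  exact lt_of_mul_lt_mul_left (by linarith) hm.le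

theorem core (n : ℕ) (hn : 0 < n) (parts : Finset (Set ℝ)) (hpos : ∀ C ∈ parts, 0 < lvol C)
    (p z w : Set ℝ → ℝ) (m₁ m₂ W : ℝ) (hm₁ : 0 < m₁) (hm₂ : 0 < m₂)
    (hp : ∀ C ∈ parts, 0 ≤ p C) (hz : ∀ C ∈ parts, 0 ≤ z C) (hw : ∀ C ∈ parts, 0 ≤ w C)
    (hf : ∀ C ∈ parts, z C + w C = lvol C)
    (hzW : ∑ C ∈ parts, p C * z C = W) (hwW : ∑ C ∈ parts, p C * w C = W)
    (hle₁ : ∀ C ∈ parts, ν₁ C ≤ m₁ * p C * lvol C)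
    (heq₁ : ∀ C ∈ parts, ν₁ C = m₁ * p C * lvol C ∨ z C = 0)
    (hle₂ : ∀ C ∈ parts, ν₂ C ≤ m₂ * p C * lvol C)
    (heq₂ : ∀ C ∈ parts, ν₂ C = m₂ * p C * lvol C ∨ w C = 0) :
    IsEqm parts (κ n) (fun i => Vlin parts (νs n i)) p
      (fun i C => (1 / (n : ℝ)) * (if (i : ℕ) < n then z else w) C) := by
  have hn' : (0 : ℝ) < n := by exact_mod_cast hn
  have hT : ∑ C ∈ parts, p C * lvol C = 2 * W := by
    rw [two_mul]
    nth_rewrite 1 [← hzW]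
    rw [← hwW, ← Finset.sum_add_distrib]
    refine Finset.sum_congr rfl fun C hC => ?_
    rw [← hf C hC]; ring
  have hk : ∀ i, κ n i * ∑ C ∈ parts, p C * lvol C = (1 / (n : ℝ)) * W := by
    intro i
    rw [hT]; unfold κ; field_simp
  refine ⟨hp, ?_, ?_, ?_, ?_⟩
  · intro i C hC
    have h1 := hz C hC
    have h2 := hw C hC
    beta_reduce
    split_ifs <;> positivity
  · intro C hC
    rw [← Finset.mul_sum, ← hf C hC]
    have : ∀ i : Fin (2 * n), (if (i : ℕ) < n then z else w) C
        = if (i : ℕ) < n then z C else w C := by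
      intro i; split_ifs <;> rfl
    simp only [this]
    rw [sum_two_groups]
    apply le_of_eq
    field_simp
  · intro i
    rw [hk]
    apply le_of_eq
    beta_reduce
    split_ifs
    · rw [← hzW, Finset.mul_sum]
      exact Finset.sum_congr rfl fun C _ => by ring
    · rw [← hwW, Finset.mul_sum]
      exact Finset.sum_congr rfl fun C _ => by ring
  · intro i y hy h
    rw [hk]
    by_cases hi : (i : ℕ) < n
    · simp only [νs, hi, if_true] at h
      exact opt_aux parts hpos ν₁ p z y m₁ _ W hm₁ hle₁ heq₁ hzW hy h
    · simp only [νs, hi, if_false] at h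
      exact opt_aux parts hpos ν₂ p w y m₂ _ W hm₂ hle₂ heq₂ hwW hy h

theorem lvol_Ico {a b : ℝ} (h : a ≤ b) : lvol (Set.Ico a b) = b - a := by
  simp [lvol, h]

theorem lvol_Icc {a b : ℝ} (h : a ≤ b) : lvol (Set.Icc a b) = b - a := by
  simp [lvol, h]

theorem lvol_Ico_inter {a b c d : ℝ} :
    lvol (Set.Ico a b ∩ Set.Icc c d) = max (min b d - max a c) 0 := by
  have : (Set.Ico a b ∩ Set.Icc c d : Set ℝ) =ᵐ[volume] (Set.Icc a b ∩ Set.Icc c d : Set ℝ) :=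
    Ico_ae_eq_Icc.inter (ae_eq_refl _)
  unfold lvol
  rw [measure_congr this, Set.Icc_inter_Icc, Real.volume_Icc, ENNReal.toReal_ofReal']

theorem lvol_Icc_inter {a b c d : ℝ} :
    lvol (Set.Icc a b ∩ Set.Icc c d) = max (min b d - max a c) 0 := by
  unfold lvol
  rw [Set.Icc_inter_Icc, Real.volume_Icc, ENNReal.toReal_ofReal']

/-- A function on sets with prescribed values on the four cells. -/
def quad (t a b c d : ℝ) (S : Set ℝ) : ℝ :=
  if S = A then a else if S = Bt t then b else if S = Ct t then c else d

theorem ne_aux {S T : Set ℝ} (x : ℝ) (h : x ∈ S) (h' : x ∉ T) : S ≠ T := by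
  rintro rfl; exact h' h

theorem cells_ne {t : ℝ} (h0 : 0 < t) (h1 : t < 1) :
    Bt t ≠ A ∧ Ct t ≠ A ∧ D ≠ A ∧ Ct t ≠ Bt t ∧ D ≠ Bt t ∧ D ≠ Ct t := by
  refine ⟨ne_aux (1/4) ?_ ?_, ne_aux ((1+2*t)/4) ?_ ?_, ne_aux 1 ?_ ?_,
    ne_aux ((1+2*t)/4) ?_ ?_, ne_aux 1 ?_ ?_, ne_aux 1 ?_ ?_⟩ <;>
  simp only [A, Bt, Ct, D, Set.mem_Ico, Set.mem_Icc, not_and, not_lt] <;>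
  first
  | (constructor <;> linarith)
  | (intros; linarith)

theorem quads {t : ℝ} (h0 : 0 < t) (h1 : t < 1) (a b c d : ℝ) :
    quad t a b c d A = a ∧ quad t a b c d (Bt t) = b ∧ quad t a b c d (Ct t) = c ∧
      quad t a b c d D = d := by
  obtain ⟨e1, e2, e3, e4, e5, e6⟩ := cells_ne h0 h1
  simp [quad, e1, e2, e3, e4, e5, e6]

theorem sum_parts {t : ℝ} (h0 : 0 < t) (h1 : t < 1) (f : Set ℝ → ℝ) :
    ∑ C ∈ partsT t, f C = f A + f (Bt t) + f (Ct t) + f D := by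
  obtain ⟨e1, e2, e3, e4, e5, e6⟩ := cells_ne h0 h1
  unfold partsT
  rw [Finset.sum_insert, Finset.sum_insert, Finset.sum_insert, Finset.sum_singleton]
  · ring
  · simpa using e6.symm
  · simpa using ⟨e4.symm, e5.symm⟩
  · simpa using ⟨e1.symm, e2.symm, e3.symm⟩

theorem forall_parts {t : ℝ} (P : Set ℝ → Prop) :
    (∀ C ∈ partsT t, P C) ↔ P A ∧ P (Bt t) ∧ P (Ct t) ∧ P D := by
  simp [partsT]

theorem vols {t : ℝ} (h0 : 0 < t) (h1 : t < 1) :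
    lvol A = 1/4 ∧ lvol (Bt t) = t/2 ∧ lvol (Ct t) = (1-t)/2 ∧ lvol D = 1/4 := by
  refine ⟨?_, ?_, ?_, ?_⟩
  · rw [A, lvol_Ico] <;> linarith
  · rw [Bt, lvol_Ico] <;> linarith
  · rw [Ct, lvol_Ico] <;> linarith
  · rw [D, lvol_Icc] <;> linarith

theorem nus_lo {t : ℝ} (h0 : 0 < t) (h1 : t ≤ 1/2) :
    (ν₁ A = 1/2 ∧ ν₁ (Bt t) = t ∧ ν₁ (Ct t) = (1-2*t)/2 ∧ ν₁ D = 0) ∧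
    (ν₂ A = 0 ∧ ν₂ (Bt t) = 0 ∧ ν₂ (Ct t) = 1/2 ∧ ν₂ D = 1/2) := by
  simp only [ν₁, ν₂, A, Bt, Ct, D, lvol_Ico_inter, lvol_Icc_inter]
  refine ⟨⟨?_, ?_, ?_, ?_⟩, ⟨?_, ?_, ?_, ?_⟩⟩ <;>
  · simp only [max_def, min_def]
    split_ifs <;> linarith

theorem nus_hi {t : ℝ} (h0 : 1/2 ≤ t) (h1 : t < 1) :
    (ν₁ A = 1/2 ∧ ν₁ (Bt t) = 1/2 ∧ ν₁ (Ct t) = 0 ∧ ν₁ D = 0) ∧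
    (ν₂ A = 0 ∧ ν₂ (Bt t) = (2*t-1)/2 ∧ ν₂ (Ct t) = 1-t ∧ ν₂ D = 1/2) := by
  simp only [ν₁, ν₂, A, Bt, Ct, D, lvol_Ico_inter, lvol_Icc_inter]
  refine ⟨⟨?_, ?_, ?_, ?_⟩, ⟨?_, ?_, ?_, ?_⟩⟩ <;>
  · simp only [max_def, min_def]
    split_ifs <;> linarith

/-- Existence of an equilibrium with given prices. -/
def HasEq (n : ℕ) (t a b c : ℝ) : Prop :=
  ∃ x : Fin (2 * n) → Set ℝ → ℝ,
    IsEqm (partsT t) (κ n) (fun i => Vlin (partsT t) (νs n i)) (quad t a b c 1) x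

theorem core4 (n : ℕ) (hn : 0 < n) {t : ℝ} (h0 : 0 < t) (h1 : t < 1)
    (a b c zB zC m₁ m₂ : ℝ) (hm₁ : 0 < m₁) (hm₂ : 0 < m₂)
    (ha : 0 ≤ a) (hb : 0 ≤ b) (hc : 0 ≤ c)
    (hzB : 0 ≤ zB) (hzC : 0 ≤ zC) (hwB : zB ≤ t/2) (hwC : zC ≤ (1-t)/2)
    (hbud : a * (1/4) + b * zB + c * zC = b * (t/2 - zB) + c * ((1-t)/2 - zC) + 1/4)
    (hA₁ : ν₁ A = m₁ * a * (1/4)) (hB₁ : ν₁ (Bt t) = m₁ * b * (t/2))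
    (hC₁ : ν₁ (Ct t) ≤ m₁ * c * ((1-t)/2)) (hC₁' : ν₁ (Ct t) = m₁ * c * ((1-t)/2) ∨ zC = 0)
    (hD₁ : ν₁ D = 0)
    (hA₂ : ν₂ A = 0) (hD₂ : ν₂ D = m₂ * (1/4)) (hC₂ : ν₂ (Ct t) = m₂ * c * ((1-t)/2))
    (hB₂ : ν₂ (Bt t) ≤ m₂ * b * (t/2)) (hB₂' : ν₂ (Bt t) = m₂ * b * (t/2) ∨ t/2 - zB = 0) :
    HasEq n t a b c := by
  obtain ⟨v1, v2, v3, v4⟩ := vols h0 h1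
  obtain ⟨p1, p2, p3, p4⟩ := quads h0 h1 a b c 1
  obtain ⟨z1, z2, z3, z4⟩ := quads h0 h1 (1/4) zB zC 0
  obtain ⟨w1, w2, w3, w4⟩ := quads h0 h1 0 (t/2 - zB) ((1-t)/2 - zC) (1/4)
  refine ⟨_, core n hn (partsT t) ?_ (quad t a b c 1) (quad t (1/4) zB zC 0)
    (quad t 0 (t/2 - zB) ((1-t)/2 - zC) (1/4)) m₁ m₂ (a * (1/4) + b * zB + c * zC)
    hm₁ hm₂ ?_ ?_ ?_ ?_ ?_ ?_ ?_ ?_ ?_ ?_⟩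
  all_goals first | rw [forall_parts] | rw [sum_parts h0 h1]
  all_goals simp only [v1, v2, v3, v4, p1, p2, p3, p4, z1, z2, z3, z4, w1, w2, w3, w4]
  · refine ⟨?_, ?_, ?_, ?_⟩ <;> linarith
  · refine ⟨?_, ?_, ?_, ?_⟩ <;> linarith
  · refine ⟨?_, ?_, ?_, ?_⟩ <;> linarith
  · refine ⟨?_, ?_, ?_, ?_⟩ <;> linarith
  · refine ⟨?_, ?_, ?_, ?_⟩ <;> linarith
  · ring
  · linarith
  · refine ⟨hA₁.le, hB₁.le, hC₁, ?_⟩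
    rw [hD₁]; positivity
  · exact ⟨Or.inl hA₁, Or.inl hB₁, hC₁', Or.inr trivial⟩
  · refine ⟨?_, hB₂, hC₂.le, ?_⟩
    · rw [hA₂]; positivity
    · rw [hD₂]; linarith
  · exact ⟨Or.inr trivial, hB₂', Or.inl hC₂, Or.inl (by rw [hD₂]; ring)⟩

theorem case1 (n : ℕ) (hn : 0 < n) {t : ℝ} (h0 : 0 < t) (h : t ≤ 1/6) :
    HasEq n t (1/(1 - 2*t)) (1/(1 - 2*t)) (1/(2*(1 - t))) := by
  obtain ⟨⟨a1, a2, a3, a4⟩, b1, b2, b3, b4⟩ := nus_lo h0 (by linarith : t ≤ 1/2)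
  have q1 : 0 < 1 - 2*t := by linarith
  have q2 : 0 < 1 - t := by linarith
  have q3 : 0 ≤ 1 - 6*t := by linarith
  refine core4 n hn h0 (by linarith) _ _ _ (t/2) ((1-t)*(1-6*t)/(4*(1-2*t))) (2*(1-2*t)) 2
    (by linarith) (by norm_num) (by positivity) (by positivity) (by positivity) (by positivity)
    (by positivity) le_rfl ?_ ?_ ?_ ?_ ?_ (Or.inl ?_) a4 b1 ?_ ?_ ?_ (Or.inr (by ring))
  · rw [div_le_div_iff₀ (by positivity) (by norm_num)]
    nlinarith
  · field_simp; ring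
  · rw [a1]; field_simp; try norm_num
  · rw [a2]
    have e : 2*(1-2*t)*(1/(1-2*t)) = 2 := by field_simp
    rw [e]; ring
  · rw [a3]; apply le_of_eq; field_simp
  · rw [a3]; field_simp
  · rw [b4]; norm_num
  · rw [b3]; field_simp
  · rw [b2]; positivity

theorem case2 (n : ℕ) (hn : 0 < n) {t : ℝ} (h0 : 1/6 ≤ t) (h : t ≤ 1/2) :
    HasEq n t (2/(1 + 2*t)) (2/(1 + 2*t)) (1/(2*(1 - t))) := by
  have ht : 0 < t := by linarith
  obtain ⟨⟨a1, a2, a3, a4⟩, b1, b2, b3, b4⟩ := nus_lo ht h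
  have q1 : 0 < 1 + 2*t := by linarith
  have q2 : 0 < 1 - t := by linarith
  refine core4 n hn ht (by linarith) _ _ _ (t/2) 0 (1+2*t) 2
    (by linarith) (by norm_num) (by positivity) (by positivity) (by positivity) (by positivity)
    le_rfl le_rfl (by positivity) ?_ ?_ ?_ ?_ (Or.inr rfl) a4 b1 ?_ ?_ ?_ (Or.inr (by ring))
  · field_simp; ring
  · rw [a1]; field_simp; try norm_num
  · rw [a2]; field_simp
  · rw [a3]
    have : (1 + 2*t) * (1/(2*(1-t))) * ((1-t)/2) = (1+2*t)/4 := by field_simp; norm_num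
    rw [this]; linarith
  · rw [b4]; norm_num
  · rw [b3]; field_simp
  · rw [b2]; positivity

theorem case3 (n : ℕ) (hn : 0 < n) {t : ℝ} (h0 : 1/2 ≤ t) (h : t ≤ 5/6) :
    HasEq n t ((3 - 2*t)/2) ((3 - 2*t)/(4*t)) 1 := by
  have ht : 0 < t := by linarith
  obtain ⟨⟨a1, a2, a3, a4⟩, b1, b2, b3, b4⟩ := nus_hi h0 (by linarith)
  have q1 : 0 < 3 - 2*t := by linarith
  have q2 : 0 < 1 - t := by linarith
  refine core4 n hn ht (by linarith) _ _ _ (t/2) 0 (4/(3-2*t)) 2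
    (by positivity) (by norm_num) (by positivity) (by positivity) (by positivity) (by positivity)
    le_rfl le_rfl (by positivity) ?_ ?_ ?_ ?_ (Or.inr rfl) a4 b1 ?_ ?_ ?_ (Or.inr (by ring))
  · field_simp; ring
  · rw [a1]; field_simp; try norm_num
  · rw [a2]; field_simp; try norm_num
  · rw [a3]; positivity
  · rw [b4]; norm_num
  · rw [b3]; ring
  · rw [b2]
    have : 2 * ((3 - 2*t)/(4*t)) * (t/2) = (3-2*t)/4 := by field_simp
    rw [this]; linarith

theorem case4 (n : ℕ) (hn : 0 < n) {t : ℝ} (h0 : 5/6 < t) (h : t < 1) :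
    HasEq n t (2*t - 1) ((2*t - 1)/(2*t)) 1 := by
  have ht : 0 < t := by linarith
  obtain ⟨⟨a1, a2, a3, a4⟩, b1, b2, b3, b4⟩ := nus_hi (by linarith : 1/2 ≤ t) h
  have q1 : 0 < 2*t - 1 := by linarith
  have q2 : 0 < 1 - t := by linarith
  have q3 : 0 < 3 - 2*t := by linarith
  refine core4 n hn ht (by linarith) _ _ _ (t*(3-2*t)/(4*(2*t-1))) 0 (2/(2*t-1)) 2
    (by positivity) (by norm_num) (by positivity) (by positivity) (by positivity) (by positivity)
    le_rfl ?_ (by positivity) ?_ ?_ ?_ ?_ (Or.inr rfl) a4 b1 ?_ ?_ ?_ (Or.inl ?_)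
  · rw [div_le_div_iff₀ (by positivity) (by norm_num)]
    nlinarith
  · field_simp; ring
  · rw [a1]; field_simp; try norm_num
  · rw [a2]; field_simp
  · rw [a3]; positivity
  · rw [b4]; norm_num
  · rw [b3]; ring
  · rw [b2]; apply le_of_eq; field_simp
  · rw [b2]; field_simp

/-- for every `t ∈ (0,1)` the economy `E(π_t)` has a competitive
equilibrium with `p_t(D) = 1` whose prices are given by the stated case-by-case
formulas; in particular the price ratio `p_t(A)/p_t(D)` takes every value in
`[2/3, 3/2]` as `t` ranges over `(0,1)`. -/
theorem equilibrium_prices (n : ℕ) (hn : 0 < n) :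
    (∀ t ∈ Set.Ioo (0 : ℝ) 1,
      ∃ (p : Set ℝ → ℝ) (x : Fin (2 * n) → Set ℝ → ℝ),
        IsEqm (partsT t) (κ n) (fun i => Vlin (partsT t) (νs n i)) p x ∧
        p D = 1 ∧
        (t ≤ 1/6 →
          p A = 1/(1 - 2*t) ∧ p (Bt t) = 1/(1 - 2*t) ∧ p (Ct t) = 1/(2*(1 - t))) ∧
        (1/6 < t → t ≤ 1/2 →
          p A = 2/(1 + 2*t) ∧ p (Bt t) = 2/(1 + 2*t) ∧ p (Ct t) = 1/(2*(1 - t))) ∧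
        (1/2 ≤ t → t ≤ 5/6 →
          p A = (3 - 2*t)/2 ∧ p (Bt t) = (3 - 2*t)/(4*t) ∧ p (Ct t) = 1) ∧
        (5/6 < t →
          p A = 2*t - 1 ∧ p (Bt t) = (2*t - 1)/(2*t) ∧ p (Ct t) = 1)) ∧
    (∀ r ∈ Set.Icc (2/3 : ℝ) (3/2),
      ∃ t ∈ Set.Ioo (0 : ℝ) 1, ∃ (p : Set ℝ → ℝ) (x : Fin (2 * n) → Set ℝ → ℝ),
        IsEqm (partsT t) (κ n) (fun i => Vlin (partsT t) (νs n i)) p x ∧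
        p D = 1 ∧ p A / p D = r) := by
  refine ⟨?_, ?_⟩
  · rintro t ⟨h0, h1⟩
    rcases le_or_gt t (1/6) with c1 | c1
    · obtain ⟨x, hx⟩ := case1 n hn h0 c1
      obtain ⟨p1, p2, p3, p4⟩ := quads h0 h1 (1/(1 - 2*t)) (1/(1 - 2*t)) (1/(2*(1 - t))) 1
      exact ⟨_, x, hx, p4, fun _ => ⟨p1, p2, p3⟩, fun _ _ => by linarith,
        fun _ _ => by linarith, fun _ => by linarith⟩
    rcases le_or_gt t (1/2) with c2 | c2
    · obtain ⟨x, hx⟩ := case2 n hn c1.le c2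
      obtain ⟨p1, p2, p3, p4⟩ := quads h0 h1 (2/(1 + 2*t)) (2/(1 + 2*t)) (1/(2*(1 - t))) 1
      refine ⟨_, x, hx, p4, fun _ => by linarith, fun _ _ => ⟨p1, p2, p3⟩,
        fun h _ => ?_, fun _ => by linarith⟩
      obtain rfl : t = 1/2 := le_antisymm c2 h
      rw [p1, p2, p3]
      norm_num
    rcases le_or_gt t (5/6) with c3 | c3
    · obtain ⟨x, hx⟩ := case3 n hn c2.le c3
      obtain ⟨p1, p2, p3, p4⟩ := quads h0 h1 ((3 - 2*t)/2) ((3 - 2*t)/(4*t)) 1 1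
      exact ⟨_, x, hx, p4, fun _ => by linarith, fun _ _ => by linarith,
        fun _ _ => ⟨p1, p2, p3⟩, fun _ => by linarith⟩
    · obtain ⟨x, hx⟩ := case4 n hn c3 h1
      obtain ⟨p1, p2, p3, p4⟩ := quads h0 h1 (2*t - 1) ((2*t - 1)/(2*t)) 1 1
      exact ⟨_, x, hx, p4, fun _ => by linarith, fun _ _ => by linarith,
        fun _ _ => by linarith, fun _ => ⟨p1, p2, p3⟩⟩
  · rintro r ⟨hr0, hr1⟩
    have hr : 0 < r := by linarith
    rcases le_total r 1 with c | c
    · have h0 : 0 < (3 - 2*r)/2 := by linarith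
      have h1 : (3 - 2*r)/2 < 1 := by linarith
      obtain ⟨x, hx⟩ := case3 n hn (t := (3 - 2*r)/2) (by linarith) (by linarith)
      refine ⟨(3 - 2*r)/2, ⟨h0, h1⟩, _, x, hx, (quads h0 h1 _ _ _ _).2.2.2, ?_⟩
      rw [(quads h0 h1 _ _ _ _).2.2.2, (quads h0 h1 _ _ _ _).1]
      ring
    · have e1 : 1/r ≤ 1 := by rw [div_le_one hr]; exact c
      have e2 : 2/3 ≤ 1/r := by rw [div_le_div_iff₀ (by norm_num) hr]; linarith
      have h0 : 0 < 1/r - 1/2 := by linarith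
      have h1 : 1/r - 1/2 < 1 := by linarith
      obtain ⟨x, hx⟩ := case2 n hn (t := 1/r - 1/2) (by linarith) (by linarith)
      refine ⟨1/r - 1/2, ⟨h0, h1⟩, _, x, hx, (quads h0 h1 _ _ _ _).2.2.2, ?_⟩
      rw [(quads h0 h1 _ _ _ _).2.2.2, (quads h0 h1 _ _ _ _).1]
      have : 1 + 2 * (1/r - 1/2) = 2/r := by ring
      rw [this]
      field_simp

end Stmt11

end
end
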